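/- Let L > 0, M ≥ 1, let a : ℝ → ℝ be an L-periodic continuous function with magnetic flux α = (1/(2π))∫₀^L a(x)dx, α ∉ ℤ, and define k(α) = 1/|sin(2πα)| if α mod 1 ∈ (0,1/4) ∪ (3/4,1) and k(α) = 1 if α mod 1 ∈ [1/4,3/4]. Let ψ₁,…,ψ_N : ℝ → ℂ^M be L-periodic H¹ vector functions orthonormal in L²((0,L), ℂ^M), and let U(x) = Σ_{n=1}^N ψ_n(x) ψ_n(x)^*. Then ∫₀^L Tr[U(x)³] dx ≤ k(α)² · Σ_{n=1}^N ∫₀^L |i ψ_n'(x) − a(x)ψ_n(x)|²_{ℂ^M} dx. -/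

import Mathlib

open MeasureTheory Real Filter

/-- The constant `k(α)` from (K1): `1/|sin(2πα)|` when `α mod 1 ∈ (0,1/4)∪(3/4,1)`,
and `1` when `α mod 1 ∈ [1/4,3/4]`. -/
noncomputable def kConst (α : ℝ) : ℝ :=
  if 1/4 ≤ Int.fract α ∧ Int.fract α ≤ 3/4 then 1
  else 1 / |Real.sin (2 * Real.pi * α)|

/-- `F(b,α) = b^{5/3} Σ_{k∈ℤ} (|k+α|³+b)^{-2}`. -/
noncomputable def Fsum (α b : ℝ) : ℝ :=
  b ^ ((5:ℝ)/3) * ∑' k : ℤ, ((|(k : ℝ) + α| ^ 3 + b) ^ 2)⁻¹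

/-- `sup_{b ≥ 0} F(b,α)`. -/
noncomputable def supF (α : ℝ) : ℝ := ⨆ b : {x : ℝ // 0 ≤ x}, Fsum α b.1

/-- The constant `K₂(α)`. -/
noncomputable def K2 (α : ℝ) : ℝ :=
  5 / (3 * Real.sqrt 3 * Real.pi) * (supF α) ^ 2

/-- `K(α) = min(K₁(α), K₂(α))` with `K₁(α) = k(α)²`. -/
noncomputable def Kmin (α : ℝ) : ℝ := min ((kConst α) ^ 2) (K2 α)

/-!
Fix `λ > 0`. Subtracting a total derivative from `‖v'‖² + λ² ‖v‖²` leaves a perfect square, which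
bounds the integral over `(p, q)` from below by the sharp quadratic form in `v p` and `v q`. A gauge
transformation turns `D u = i u' - a u` into `v'` up to a phase, and the periodicity of `u` into
`v q = e^{iθ} v p`, where `θ` is the integral of `a` over a period. Hence
`2 λ (cosh (λ L) - cos θ) ‖u x‖² ≤ sinh (λ L) ∫ (‖D u‖² + λ² ‖u‖²)`. When `sinh ≤ k (cosh - cos θ)`,
optimising in `λ` gives `‖u x‖⁴ ≤ k² ∫ ‖u‖² ∫ ‖D u‖²`.

For an orthonormal family this is applied to `u = ∑ dₙ ψₙ`, where `d` runs through the unit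
eigenvectors of the Gram matrix `G x` of the vectors `ψₙ x`. With `H` the Gram matrix of the
functions `D ψₙ`, each eigenvalue `μ` satisfies `μ² ≤ k² d* H d`, hence
`Tr (U x)³ = Tr (G x)³ ≤ k² Tr (G x H)`. Integration in `x` replaces `G x` by the identity.
-/

section BoundaryForm

variable {E : Type*} [NormedAddCommGroup E] [InnerProductSpace ℝ E]

/- With `ω y = exp (-lam * (y - p))` and `F y = lam * (2 * ‖v y + ω y • g‖ ^ 2 - ‖v y‖ ^ 2)` one has
`‖v'‖ ^ 2 + lam ^ 2 * ‖v‖ ^ 2 - F' = ‖v' - lam • (v + (2 * ω) • g)‖ ^ 2`. -/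
lemma calibration_sub_le_integral {v v' : ℝ → E} {p q : ℝ} (hpq : p ≤ q)
    (hv : ∀ y, HasDerivAt v (v' y) y) (hv' : Continuous v') (lam : ℝ) (g : E) :
    lam * (2 * ‖v q + Real.exp (-lam * (q - p)) • g‖ ^ 2 - ‖v q‖ ^ 2) -
        lam * (2 * ‖v p + g‖ ^ 2 - ‖v p‖ ^ 2) ≤
      ∫ y in p..q, (‖v' y‖ ^ 2 + lam ^ 2 * ‖v y‖ ^ 2) := by
  set ω : ℝ → ℝ := fun y => Real.exp (-lam * (y - p)) with hω
  have hω' : ∀ y, HasDerivAt ω (-lam * ω y) y := fun y => by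
    have h := ((((hasDerivAt_id y).sub_const p).const_mul (-lam)).exp)
    simpa [hω, mul_comm] using h
  have hvc : Continuous v := continuous_iff_continuousAt.2 fun y => (hv y).continuousAt
  have hωc : Continuous ω := by fun_prop
  have hF : ∀ y, HasDerivAt (fun y => lam * (2 * ‖v y + ω y • g‖ ^ 2 - ‖v y‖ ^ 2))
      (lam * (2 * (2 * inner ℝ (v y + ω y • g) (v' y + (-lam * ω y) • g)) -
        2 * inner ℝ (v y) (v' y))) y := fun y =>
    (((((hv y).add ((hω' y).smul_const g)).norm_sq).const_mul 2).sub
      (hv y).norm_sq).const_mul lam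
  have hF_le : ∀ y, lam * (2 * (2 * inner ℝ (v y + ω y • g) (v' y + (-lam * ω y) • g)) -
        2 * inner ℝ (v y) (v' y)) ≤ ‖v' y‖ ^ 2 + lam ^ 2 * ‖v y‖ ^ 2 := fun y => by
    have h := sq_nonneg ‖v' y - lam • (v y + (2 * ω y) • g)‖
    rw [← real_inner_self_eq_norm_sq] at h ⊢
    rw [← real_inner_self_eq_norm_sq]
    simp only [inner_add_left, inner_add_right, inner_sub_left, inner_sub_right,
      real_inner_smul_left, real_inner_smul_right, real_inner_comm (v' y) (v y),
      real_inner_comm g (v y), real_inner_comm g (v' y)] at h ⊢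
    linarith
  have hint := intervalIntegral.integral_eq_sub_of_hasDerivAt (a := p) (b := q)
    (fun y _ => hF y) (Continuous.intervalIntegrable (by fun_prop) _ _)
  have hωp : ω p = 1 := by simp [hω]
  rw [hωp, one_smul] at hint
  rw [← hint]
  exact intervalIntegral.integral_mono hpq (Continuous.intervalIntegrable (by fun_prop) _ _)
    (Continuous.intervalIntegrable (by fun_prop) _ _) hF_le

lemma boundary_form_le_sinh_mul_integral {v v' : ℝ → E} {p q : ℝ} (hpq : p < q)
    (hv : ∀ y, HasDerivAt v (v' y) y) (hv' : Continuous v') {lam : ℝ} (hlam : 0 < lam) :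
    lam * (Real.cosh (lam * (q - p)) * (‖v p‖ ^ 2 + ‖v q‖ ^ 2) - 2 * inner ℝ (v p) (v q)) ≤
      Real.sinh (lam * (q - p)) * ∫ y in p..q, (‖v' y‖ ^ 2 + lam ^ 2 * ‖v y‖ ^ 2) := by
  set s := Real.sinh (lam * (q - p))
  set ω := Real.exp (-lam * (q - p)) with hω
  have hs_pos : 0 < s := Real.sinh_pos_iff.2 (mul_pos hlam (sub_pos.2 hpq))
  have hω_pos : 0 < ω := Real.exp_pos _
  have hcosh : Real.cosh (lam * (q - p)) = ω + s := by
    rw [hω, neg_mul, ← Real.cosh_sub_sinh]; ring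
  have hωs : ω * (ω + 2 * s) = 1 := by
    have h : ω + 2 * s = Real.exp (lam * (q - p)) := by
      rw [← Real.cosh_add_sinh, hcosh]; ring
    rw [h, hω, ← Real.exp_add]; simp
  -- this `g` makes the square in `calibration_sub_le_integral` vanish for the minimiser with the
  -- end values of `v`, so that nothing is lost
  have h := mul_le_mul_of_nonneg_left (calibration_sub_le_integral hpq.le hv hv' lam
    ((2 * ω * s)⁻¹ • (ω • v q - v p))) hs_pos.le
  refine le_of_eq_of_le ?_ h
  rw [hcosh]
  simp only [← hω, ← real_inner_self_eq_norm_sq]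
  simp only [inner_add_left, inner_add_right, inner_sub_left, inner_sub_right,
      real_inner_smul_left, real_inner_smul_right, real_inner_comm (v p) (v q)]
  field_simp
  linear_combination ((2 * ω * s - 1) * inner ℝ (v p) (v p) -
    ω ^ 2 * inner ℝ (v q) (v q) + 2 * ω * inner ℝ (v p) (v q)) * hωs

end BoundaryForm

section MagneticDeriv

variable {E : Type*} [NormedAddCommGroup E] [NormedSpace ℂ E]

/-- The magnetic derivative `i u' - a u` of an `E`-valued function `u` in the real potential `a`.
It inherits from `deriv` the value `-a u` at points where `u` is not differentiable. -/
noncomputable def magneticDeriv (a : ℝ → ℝ) (u : ℝ → E) (x : ℝ) : E :=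
  Complex.I • deriv u x - (a x : ℂ) • u x

lemma continuous_magneticDeriv {a : ℝ → ℝ} {u : ℝ → E} (ha : Continuous a) (hu : ContDiff ℝ 1 u) :
    Continuous (magneticDeriv a u) := by
  have := hu.continuous
  have := hu.continuous_deriv le_rfl
  unfold magneticDeriv
  fun_prop

lemma periodic_magneticDeriv {a : ℝ → ℝ} {u : ℝ → E} {L : ℝ} (ha : Function.Periodic a L)
    (hu : Function.Periodic u L) : Function.Periodic (magneticDeriv a u) L := fun x => by
  have hu' : deriv u (x + L) = deriv u x := by
    rw [← deriv_comp_add_const, show (fun y => u (y + L)) = u from funext hu]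
  simp only [magneticDeriv, hu', ha x, hu x]

lemma magneticDeriv_sum_smul {ι : Type*} [Fintype ι] (a : ℝ → ℝ) {f : ι → ℝ → E}
    (hf : ∀ n, Differentiable ℝ (f n)) (d : ι → ℂ) (x : ℝ) :
    magneticDeriv a (fun y => ∑ n, d n • f n y) x = ∑ n, d n • magneticDeriv a (f n) x := by
  have hderiv : deriv (fun y => ∑ n, d n • f n y) x = ∑ n, d n • deriv (f n) x :=
    (HasDerivAt.fun_sum fun n _ => ((hf n x).hasDerivAt.const_smul (d n))).deriv
  simp only [magneticDeriv, hderiv, Finset.smul_sum, smul_sub, Finset.sum_sub_distrib,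
    smul_comm (d _)]

lemma hasDerivAt_exp_smul {a φ : ℝ → ℝ} {u : ℝ → E} {x : ℝ} (hφ : HasDerivAt φ (a x) x)
    (hu : DifferentiableAt ℝ u x) :
    HasDerivAt (fun y => Complex.exp (φ y * Complex.I) • u y)
      ((-Complex.I * Complex.exp (φ x * Complex.I)) • magneticDeriv a u x) x := by
  refine ((hφ.ofReal_comp.mul_const Complex.I).cexp.smul hu.hasDerivAt).congr_deriv ?_
  simp only [magneticDeriv, smul_sub, smul_smul]
  have hI : -Complex.I * Complex.exp (φ x * Complex.I) * Complex.I =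
      Complex.exp (φ x * Complex.I) := by
    linear_combination (-Complex.exp (φ x * Complex.I)) * Complex.I_sq
  rw [hI, sub_eq_add_neg, ← neg_smul]
  congr 2
  ring

end MagneticDeriv

section PointwiseBound

variable {E : Type*} [NormedAddCommGroup E] [InnerProductSpace ℂ E]

lemma cosh_sub_cos_mul_norm_sq_le {a : ℝ → ℝ} (ha : Continuous a) {u : ℝ → E}
    (hu : ContDiff ℝ 1 u) {p q : ℝ} (hpq : p < q) (hupq : u q = u p) {lam : ℝ} (hlam : 0 < lam) :
    2 * lam * (Real.cosh (lam * (q - p)) - Real.cos (∫ t in p..q, a t)) * ‖u p‖ ^ 2 ≤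
      Real.sinh (lam * (q - p)) *
        ∫ y in p..q, (‖magneticDeriv a u y‖ ^ 2 + lam ^ 2 * ‖u y‖ ^ 2) := by
  let : InnerProductSpace ℝ E := InnerProductSpace.complexToReal
  set φ : ℝ → ℝ := fun y => ∫ t in p..y, a t
  have hφ' : ∀ y, HasDerivAt φ (a y) y := fun y =>
    intervalIntegral.integral_hasDerivAt_right (ha.intervalIntegrable p y)
      (ha.stronglyMeasurableAtFilter _ _) ha.continuousAt
  have hφc : Continuous φ := continuous_iff_continuousAt.2 fun y => (hφ' y).continuousAt
  have hDc := continuous_magneticDeriv ha hu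
  have h := boundary_form_le_sinh_mul_integral hpq
    (fun y => hasDerivAt_exp_smul (hφ' y) (hu.differentiable one_ne_zero y)) (by fun_prop) hlam
  have hφp : φ p = 0 := intervalIntegral.integral_same
  have hinner : inner ℝ (u p) (Complex.exp (φ q * Complex.I) • u p) =
      Real.cos (φ q) * ‖u p‖ ^ 2 := by
    change (inner ℂ (u p) (Complex.exp (φ q * Complex.I) • u p)).re = _
    simp [inner_self_eq_norm_sq_to_K, Complex.exp_ofReal_mul_I_re,
      ← Complex.ofReal_pow]
  simp only [norm_smul, norm_mul, norm_neg, Complex.norm_I, Complex.norm_exp_ofReal_mul_I,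
    one_mul, hupq, hφp, Complex.ofReal_zero, zero_mul, Complex.exp_zero, one_smul, hinner] at h
  exact le_of_eq_of_le (by ring) h

lemma cosh_sub_cos_pos {T : ℝ} (hT : 0 < T) (θ : ℝ) : 0 < Real.cosh T - Real.cos θ :=
  sub_pos.2 ((Real.cos_le_one θ).trans_lt (Real.one_lt_cosh.2 hT.ne'))

lemma two_mul_mul_norm_sq_le {a : ℝ → ℝ} (ha : Continuous a) {u : ℝ → E}
    (hu : ContDiff ℝ 1 u) {p q : ℝ} (hpq : p < q) (hupq : u q = u p) {k : ℝ}
    (hk : ∀ T, Real.sinh T ≤ k * (Real.cosh T - Real.cos (∫ t in p..q, a t)))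
    {lam : ℝ} (hlam : 0 < lam) :
    2 * lam * ‖u p‖ ^ 2 ≤ k * ∫ y in p..q, (‖magneticDeriv a u y‖ ^ 2 + lam ^ 2 * ‖u y‖ ^ 2) := by
  have hT : 0 < lam * (q - p) := mul_pos hlam (sub_pos.2 hpq)
  refine le_of_mul_le_mul_left ?_ (cosh_sub_cos_pos hT (∫ t in p..q, a t))
  have h := (cosh_sub_cos_mul_norm_sq_le ha hu hpq hupq hlam).trans
    (mul_le_mul_of_nonneg_right (hk _)
      (intervalIntegral.integral_nonneg hpq.le fun y _ => by positivity))
  linarith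

lemma norm_pow_four_le {a : ℝ → ℝ} (ha : Continuous a) {u : ℝ → E}
    (hu : ContDiff ℝ 1 u) {p q : ℝ} (hpq : p < q) (hupq : u q = u p) {k : ℝ}
    (hk : ∀ T, Real.sinh T ≤ k * (Real.cosh T - Real.cos (∫ t in p..q, a t))) :
    ‖u p‖ ^ 4 ≤
      k ^ 2 * (∫ y in p..q, ‖u y‖ ^ 2) * ∫ y in p..q, ‖magneticDeriv a u y‖ ^ 2 := by
  have huc := hu.continuous
  have hDc := continuous_magneticDeriv ha hu
  set W := ∫ y in p..q, ‖u y‖ ^ 2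
  set D := ∫ y in p..q, ‖magneticDeriv a u y‖ ^ 2
  have hW : 0 ≤ W := intervalIntegral.integral_nonneg hpq.le fun y _ => by positivity
  have hD : 0 ≤ D := intervalIntegral.integral_nonneg hpq.le fun y _ => by positivity
  have hk_nonneg : 0 ≤ k := (pos_of_mul_pos_left
    ((Real.sinh_pos_iff.2 one_pos).trans_le (hk 1)) (cosh_sub_cos_pos one_pos _).le).le
  have hsplit : ∀ lam : ℝ, ∫ y in p..q, (‖magneticDeriv a u y‖ ^ 2 + lam ^ 2 * ‖u y‖ ^ 2) =
      D + lam ^ 2 * W := fun lam => by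
    rw [intervalIntegral.integral_add (Continuous.intervalIntegrable (by fun_prop) _ _)
      (Continuous.intervalIntegrable (by fun_prop) _ _), intervalIntegral.integral_const_mul]
  have hquad : ∀ lam : ℝ, 0 ≤ k * W * (lam * lam) + -(2 * ‖u p‖ ^ 2) * lam + k * D := fun lam => by
    rcases le_or_gt lam 0 with hlam | hlam
    · have hlin := mul_nonneg (sq_nonneg ‖u p‖) (neg_nonneg.2 hlam)
      have hsq : 0 ≤ k * W * (lam * lam) := mul_nonneg (by positivity) (mul_self_nonneg lam)
      have hconst : 0 ≤ k * D := by positivity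
      linarith
    · have h := two_mul_mul_norm_sq_le ha hu hpq hupq hk hlam
      rw [hsplit] at h
      linarith
  have h := discrim_le_zero hquad
  rw [discrim] at h
  linarith

end PointwiseBound

section TraceInequality

open Matrix
open scoped ComplexOrder

lemma trace_mul_pow_succ_comm {R ι κ : Type*} [CommSemiring R] [Fintype ι] [Fintype κ]
    [DecidableEq ι] [DecidableEq κ] (A : Matrix ι κ R) (B : Matrix κ ι R) (p : ℕ) :
    ((A * B) ^ (p + 1)).trace = ((B * A) ^ (p + 1)).trace := by
  have h : (A * B) ^ (p + 1) = A * (B * A) ^ p * B := by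
    induction p with
    | zero => simp
    | succ p ih => rw [pow_succ, ih, pow_succ]; simp only [Matrix.mul_assoc]
  rw [h, trace_mul_comm, ← Matrix.mul_assoc, ← pow_succ']

variable {𝕜 ι : Type*} [RCLike 𝕜] [Fintype ι] [DecidableEq ι] {G : Matrix ι ι 𝕜}

lemma trace_mul_eq_sum_eigenvalues_mul (hG : G.IsHermitian) (H : Matrix ι ι 𝕜) :
    (G * H).trace = ∑ i, (hG.eigenvalues i : 𝕜) *
      (star ⇑(hG.eigenvectorBasis i) ⬝ᵥ H *ᵥ ⇑(hG.eigenvectorBasis i)) := by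
  conv_lhs => rw [hG.spectral_theorem, Unitary.conjStarAlgAut_apply]
  rw [Matrix.mul_assoc, Matrix.mul_assoc, trace_mul_comm, Matrix.mul_assoc]
  refine Finset.sum_congr rfl fun i _ => ?_
  rw [diag_apply, diagonal_mul, Matrix.mul_assoc]
  rfl

lemma pow_mulVec_eigenvectorBasis (hG : G.IsHermitian) (p : ℕ) (i : ι) :
    G ^ p *ᵥ ⇑(hG.eigenvectorBasis i) = hG.eigenvalues i ^ p • ⇑(hG.eigenvectorBasis i) := by
  induction p with
  | zero => simp
  | succ p ih =>
    rw [pow_succ', ← mulVec_mulVec, ih, mulVec_smul, hG.mulVec_eigenvectorBasis, smul_smul,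
      pow_succ]

lemma star_eigenvectorBasis_dotProduct_self (hG : G.IsHermitian) (i : ι) :
    star ⇑(hG.eigenvectorBasis i) ⬝ᵥ ⇑(hG.eigenvectorBasis i) = 1 := by
  rw [dotProduct_comm]
  exact inner_self_eq_one_of_norm_eq_one (hG.eigenvectorBasis.orthonormal.1 i)

lemma re_trace_pow_succ_le (hG : G.PosSemidef) {H : Matrix ι ι 𝕜} (p : ℕ)
    (h : ∀ d : ι → 𝕜, star d ⬝ᵥ d = 1 →
      RCLike.re (star d ⬝ᵥ G *ᵥ d) ^ p ≤ RCLike.re (star d ⬝ᵥ H *ᵥ d)) :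
    RCLike.re (G ^ (p + 1)).trace ≤ RCLike.re (G * H).trace := by
  have hunit := star_eigenvectorBasis_dotProduct_self hG.1
  rw [pow_succ', trace_mul_eq_sum_eigenvalues_mul hG.1, trace_mul_eq_sum_eigenvalues_mul hG.1,
    map_sum, map_sum]
  refine Finset.sum_le_sum fun i _ => ?_
  rw [RCLike.re_ofReal_mul, RCLike.re_ofReal_mul]
  refine mul_le_mul_of_nonneg_left (le_of_eq_of_le ?_ (h _ (hunit i))) (hG.eigenvalues_nonneg i)
  rw [pow_mulVec_eigenvectorBasis, hG.1.mulVec_eigenvectorBasis, dotProduct_smul, dotProduct_smul,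
    hunit, RCLike.smul_re, RCLike.smul_re, RCLike.one_re, mul_one, mul_one]

end TraceInequality

section IntegralGram

open Matrix

variable {𝕜 E ι : Type*} [RCLike 𝕜] [NormedAddCommGroup E] [InnerProductSpace 𝕜 E]

/-- The Gram matrix of a family of functions `f n` in `L²((p, q), E)`, with the entry `⟪f n, f m⟫`
at `(n, m)`; orthonormality of the family is the equation `integralGram 𝕜 p q f = 1`. The entries
are interval integrals, and so `0` where the inner product is not integrable. -/
noncomputable def integralGram (𝕜 : Type*) [RCLike 𝕜] [InnerProductSpace 𝕜 E] (p q : ℝ)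
    (f : ι → ℝ → E) : Matrix ι ι 𝕜 :=
  Matrix.of fun n m => ∫ x in p..q, inner 𝕜 (f n x) (f m x)

variable [Fintype ι] {f : ι → ℝ → E}

lemma re_intervalIntegral {F : ℝ → 𝕜} (hF : Continuous F) (p q : ℝ) :
    RCLike.re (∫ x in p..q, F x) = ∫ x in p..q, RCLike.re (F x) :=
  (RCLike.reCLM.intervalIntegral_comp_comm (hF.intervalIntegrable p q)).symm

lemma re_trace_integralGram_mul (hf : ∀ n, Continuous (f n)) (p q : ℝ) (H : Matrix ι ι 𝕜) :
    RCLike.re (integralGram 𝕜 p q f * H).trace =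
      ∫ x in p..q, RCLike.re (gram 𝕜 (fun n => f n x) * H).trace := by
  rw [← re_intervalIntegral (by simp only [trace, diag_apply, mul_apply, gram_apply]; fun_prop)]
  simp only [trace, diag_apply, mul_apply, gram_apply, integralGram, of_apply]
  rw [intervalIntegral.integral_finsetSum fun n _ =>
    Continuous.intervalIntegrable (by fun_prop) _ _]
  congr 1
  refine Finset.sum_congr rfl fun n _ => ?_
  rw [intervalIntegral.integral_finsetSum fun m _ =>
    Continuous.intervalIntegrable (by fun_prop) _ _]
  simp only [intervalIntegral.integral_mul_const]

lemma re_trace_integralGram (hf : ∀ n, Continuous (f n)) (p q : ℝ) :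
    RCLike.re (integralGram 𝕜 p q f).trace = ∑ n, ∫ x in p..q, ‖f n x‖ ^ 2 := by
  simp only [trace, diag_apply, integralGram, of_apply, map_sum]
  refine Finset.sum_congr rfl fun n _ => ?_
  rw [re_intervalIntegral (by fun_prop)]
  simp only [inner_self_eq_norm_sq]

lemma re_star_dotProduct_integralGram_mulVec (hf : ∀ n, Continuous (f n)) (p q : ℝ) (d : ι → 𝕜) :
    RCLike.re (star d ⬝ᵥ integralGram 𝕜 p q f *ᵥ d) = ∫ x in p..q, ‖∑ n, d n • f n x‖ ^ 2 := by
  have h : star d ⬝ᵥ integralGram 𝕜 p q f *ᵥ d =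
      (integralGram 𝕜 p q f * vecMulVec d (star d)).trace := by
    rw [mul_vecMulVec, trace_vecMulVec, dotProduct_comm]
  rw [h, re_trace_integralGram_mul hf]
  refine intervalIntegral.integral_congr fun x _ => ?_
  rw [mul_vecMulVec, trace_vecMulVec, dotProduct_comm, star_dotProduct_gram_mulVec,
    inner_self_eq_norm_sq]

end IntegralGram

section Coordinates

open Matrix

lemma trace_sum_mul_conj_pow_succ {𝕜 ι κ : Type*} [RCLike 𝕜] [Fintype ι] [Fintype κ]
    [DecidableEq ι] [DecidableEq κ] (v : ι → κ → 𝕜) (p : ℕ) :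
    ((Matrix.of fun j l => ∑ n, v n j * (starRingEnd 𝕜) (v n l)) ^ (p + 1)).trace =
      (gram 𝕜 (fun n => WithLp.toLp 2 (v n)) ^ (p + 1)).trace := by
  have hsum : (Matrix.of fun j l => ∑ n, v n j * (starRingEnd 𝕜) (v n l)) =
      (of v)ᵀ * (of v)ᵀᴴ := by
    ext; simp [mul_apply]
  have hgram : gram 𝕜 (fun n => WithLp.toLp 2 (v n)) = (of v)ᵀᴴ * (of v)ᵀ := by
    ext; simp [mul_apply, PiLp.inner_apply, mul_comm]
  rw [hsum, hgram, trace_mul_pow_succ_comm]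

lemma norm_sq_magneticDeriv_toLp {κ : Type*} [Fintype κ] (a : ℝ → ℝ) {u : ℝ → κ → ℂ} {x : ℝ}
    (hu : ∀ j, DifferentiableAt ℝ (fun y => u y j) x) :
    ‖magneticDeriv a (fun y => WithLp.toLp 2 (u y)) x‖ ^ 2 =
      ∑ j, ‖Complex.I * deriv (fun y => u y j) x - a x * u x j‖ ^ 2 := by
  have hderiv : deriv (fun y => WithLp.toLp 2 (u y)) x =
      WithLp.toLp 2 fun j => deriv (fun y => u y j) x := by
    rw [← deriv_pi hu]
    exact ((PiLp.continuousLinearEquiv 2 ℝ fun _ : κ => ℂ).symm.hasFDerivAt.comp_hasDerivAt x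
      (differentiableAt_pi.2 hu).hasDerivAt).deriv
  rw [EuclideanSpace.norm_sq_eq, magneticDeriv, hderiv]
  simp

lemma integralGram_toLp {𝕜 ι κ : Type*} [RCLike 𝕜] [Fintype κ] (p q : ℝ) (f : ι → ℝ → κ → 𝕜) :
    integralGram 𝕜 p q (fun n x => WithLp.toLp 2 (f n x)) =
      of fun n m => ∫ x in p..q, ∑ j, f m x j * (starRingEnd 𝕜) (f n x j) := by
  ext n m
  simp [integralGram, PiLp.inner_apply]

end Coordinates

section FluxConstant

lemma sinh_mul_abs_sin_add_cos_le_cosh (T θ : ℝ) :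
    Real.sinh T * |Real.sin θ| + Real.cos θ ≤ Real.cosh T := by
  refine le_of_sq_le_sq ?_ (Real.cosh_pos T).le
  have h1 := Real.cosh_sq T
  have h2 := Real.sin_sq_add_cos_sq θ
  rw [← sq_abs (Real.sin θ)] at h2
  nlinarith [sq_nonneg (Real.sinh T * Real.cos θ - |Real.sin θ|)]

lemma sin_two_pi_mul_ne_zero {α : ℝ} (hα : ∀ m : ℤ, α ≠ m) (hfract : Int.fract α ≠ 1 / 2) :
    Real.sin (2 * Real.pi * α) ≠ 0 := fun h => by
  obtain ⟨n, hn⟩ := Real.sin_eq_zero_iff.1 h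
  have hn' : (n : ℝ) = 2 * α := by
    have := Real.pi_ne_zero
    field_simp at hn
    linarith
  rcases Int.even_or_odd' n with ⟨m, rfl | rfl⟩ <;> push_cast at hn'
  · exact hα m (by linarith)
  · exact hfract (Int.fract_eq_iff.2 ⟨by norm_num, by norm_num, m, by linarith⟩)

lemma cos_two_pi_mul_nonpos {α : ℝ} (h : 1 / 4 ≤ Int.fract α ∧ Int.fract α ≤ 3 / 4) :
    Real.cos (2 * Real.pi * α) ≤ 0 := by
  have hcos : Real.cos (2 * Real.pi * α) = Real.cos (2 * Real.pi * Int.fract α) := by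
    rw [Int.fract, ← Real.cos_sub_int_mul_two_pi _ ⌊α⌋]
    ring_nf
  rw [hcos]
  apply Real.cos_nonpos_of_pi_div_two_le_of_le <;> nlinarith [Real.pi_pos]

lemma sinh_le_kConst_mul {α : ℝ} (hα : ∀ m : ℤ, α ≠ m) (T : ℝ) :
    Real.sinh T ≤ kConst α * (Real.cosh T - Real.cos (2 * Real.pi * α)) := by
  unfold kConst
  split_ifs with h
  · linarith [cos_two_pi_mul_nonpos h, Real.sinh_lt_cosh T]
  · have hsin : 0 < |Real.sin (2 * Real.pi * α)| :=
      abs_pos.2 (sin_two_pi_mul_ne_zero hα fun hf => h (by rw [hf]; norm_num))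
    rw [one_div, inv_mul_eq_div, le_div_iff₀ hsin]
    linarith [sinh_mul_abs_sin_add_cos_le_cosh T (2 * Real.pi * α)]

end FluxConstant

section LiebThirring

open Matrix

variable {E ι : Type*} [NormedAddCommGroup E] [InnerProductSpace ℂ E] [Fintype ι] [DecidableEq ι]

lemma re_trace_gram_pow_three_le {L : ℝ} (hL : 0 < L) {a : ℝ → ℝ} (ha : Continuous a)
    (haP : Function.Periodic a L) {k : ℝ}
    (hk : ∀ T, Real.sinh T ≤ k * (Real.cosh T - Real.cos (∫ x in (0 : ℝ)..L, a x)))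
    {ψ : ι → ℝ → E} (hψ : ∀ n, ContDiff ℝ 1 (ψ n)) (hψP : ∀ n, Function.Periodic (ψ n) L)
    (horth : integralGram ℂ 0 L ψ = 1) (x : ℝ) :
    (gram ℂ (fun n => ψ n x) ^ 3).trace.re ≤
      (gram ℂ (fun n => ψ n x) *
        (k ^ 2) • integralGram ℂ 0 L (fun n => magneticDeriv a (ψ n))).trace.re := by
  refine re_trace_pow_succ_le (posSemidef_gram ℂ _) 2 fun d hd => ?_
  have hDc : ∀ n, Continuous (magneticDeriv a (ψ n)) := fun n => continuous_magneticDeriv ha (hψ n)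
  set u : ℝ → E := fun y => ∑ n, d n • ψ n y with hu
  have huP : Function.Periodic u L := fun y => by simp only [hu, hψP _ y]
  have hnorm : ∫ y in (0 : ℝ)..L, ‖u y‖ ^ 2 = 1 := by
    rw [← re_star_dotProduct_integralGram_mulVec fun n => (hψ n).continuous, horth, one_mulVec, hd,
      RCLike.one_re]
  have hshift : ∀ f : ℝ → E, Function.Periodic f L →
      ∫ y in x..x + L, ‖f y‖ ^ 2 = ∫ y in (0 : ℝ)..L, ‖f y‖ ^ 2 := fun f hf => by
    have h := (hf.comp fun v => ‖v‖ ^ 2).intervalIntegral_add_eq x 0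
    rwa [zero_add] at h
  have hflux : ∫ y in x..x + L, a y = ∫ y in (0 : ℝ)..L, a y := by
    rw [haP.intervalIntegral_add_eq x 0, zero_add]
  have h := norm_pow_four_le ha (u := u) (by fun_prop) (lt_add_of_pos_right x hL) (huP x)
    (hflux ▸ hk)
  rw [hshift _ huP, hshift _ (periodic_magneticDeriv haP huP), hnorm, mul_one] at h
  rw [star_dotProduct_gram_mulVec, inner_self_eq_norm_sq, ← pow_mul, smul_mulVec,
    dotProduct_smul, RCLike.smul_re, re_star_dotProduct_integralGram_mulVec hDc]
  simpa only [hu, magneticDeriv_sum_smul a fun n => (hψ n).differentiable one_ne_zero] using h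

/- For `E = ℂ^M` the Gram matrix `Ψ* Ψ` replaces `U = Ψ Ψ*`: its powers have the same traces, and it
is a finite matrix for every `E`. -/
theorem matrix_lieb_thirring_orthonormal_K1_general {L : ℝ} (hL : 0 < L) {a : ℝ → ℝ}
    (ha : Continuous a) (haP : Function.Periodic a L) {k : ℝ}
    (hk : ∀ T, Real.sinh T ≤ k * (Real.cosh T - Real.cos (∫ x in (0 : ℝ)..L, a x)))
    {ψ : ι → ℝ → E} (hψ : ∀ n, ContDiff ℝ 1 (ψ n)) (hψP : ∀ n, Function.Periodic (ψ n) L)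
    (horth : integralGram ℂ 0 L ψ = 1) :
    ∫ x in (0 : ℝ)..L, (gram ℂ (fun n => ψ n x) ^ 3).trace.re ≤
      k ^ 2 * ∑ n, ∫ x in (0 : ℝ)..L, ‖magneticDeriv a (ψ n) x‖ ^ 2 := by
  set H := integralGram ℂ 0 L fun n => magneticDeriv a (ψ n)
  have hψc : ∀ n, Continuous (ψ n) := fun n => (hψ n).continuous
  have hgram : Continuous fun x => gram ℂ (fun n => ψ n x) :=
    continuous_matrix fun n m => (hψc n).inner (hψc m)
  calc ∫ x in (0 : ℝ)..L, (gram ℂ (fun n => ψ n x) ^ 3).trace.re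
      ≤ ∫ x in (0 : ℝ)..L, (gram ℂ (fun n => ψ n x) * (k ^ 2) • H).trace.re :=
        intervalIntegral.integral_mono hL.le (Continuous.intervalIntegrable (by fun_prop) _ _)
          (Continuous.intervalIntegrable (by fun_prop) _ _)
          (re_trace_gram_pow_three_le hL ha haP hk hψ hψP horth)
    _ = ((k ^ 2) • H).trace.re := by
        have h := re_trace_integralGram_mul (𝕜 := ℂ) hψc 0 L ((k ^ 2) • H)
        rw [horth, one_mul] at h
        exact h.symm
    _ = k ^ 2 * ∑ n, ∫ x in (0 : ℝ)..L, ‖magneticDeriv a (ψ n) x‖ ^ 2 := by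
        rw [trace_smul, Complex.smul_re, smul_eq_mul]
        congr 1
        exact re_trace_integralGram (𝕜 := ℂ) (fun n => continuous_magneticDeriv ha (hψ n)) 0 L

end LiebThirring

/-- matrix Lieb–Thirring inequality for orthonormal systems, constant `k(α)²`. -/
theorem matrix_lieb_thirring_orthonormal_K1
    (L : ℝ) (hL : 0 < L) (M : ℕ) (hM : 1 ≤ M)
    (a : ℝ → ℝ) (ha : Continuous a) (haP : Function.Periodic a L)
    (α : ℝ) (hα : α = (1 / (2 * Real.pi)) * ∫ x in (0:ℝ)..L, a x)
    (hαZ : ∀ m : ℤ, α ≠ (m : ℝ))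
    (N : ℕ) (ψ : Fin N → ℝ → (Fin M → ℂ))
    (hψ : ∀ n j, ContDiff ℝ 1 (fun x => ψ n x j))
    (hψP : ∀ n, Function.Periodic (ψ n) L)
    (horth : ∀ n m, ∫ x in (0:ℝ)..L, ∑ j, ψ n x j * (starRingEnd ℂ) (ψ m x j) =
      if n = m then 1 else 0) :
    ∫ x in (0:ℝ)..L,
        (Matrix.trace
          ((Matrix.of fun j l => ∑ n, ψ n x j * (starRingEnd ℂ) (ψ n x l)) ^ 3)).re ≤
      kConst α ^ 2 * ∑ n, ∫ x in (0:ℝ)..L,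
        ∑ j, ‖Complex.I * deriv (fun y => ψ n y j) x - (a x : ℂ) * ψ n x j‖ ^ 2 := by
  have hflux : ∫ x in (0 : ℝ)..L, a x = 2 * Real.pi * α := by
    rw [hα]; field_simp
  have hgram : integralGram ℂ 0 L (fun n x => WithLp.toLp 2 (ψ n x)) = 1 := by
    ext n m
    rw [integralGram_toLp, Matrix.of_apply, horth, Matrix.one_apply]
    simp only [eq_comm]
  have h := matrix_lieb_thirring_orthonormal_K1_general
    (ψ := fun n x => WithLp.toLp 2 (ψ n x)) hL ha haP (hflux ▸ sinh_le_kConst_mul hαZ)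
    (fun n => PiLp.contDiff_toLp.comp (contDiff_pi.2 (hψ n)))
    (fun n => (hψP n).comp (WithLp.toLp 2)) hgram
  simpa only [trace_sum_mul_conj_pow_succ, norm_sq_magneticDeriv_toLp a
    fun j => (hψ _ j).differentiable one_ne_zero _] using h
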